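/- Define g(ξ) := E[(ξ−Y)·1{Y≤ξ}] = ∫ max(ξ−y, 0) dμ(y) and ζ(ξ) := 1/g(ξ) for ξ ∈ ℝ. Then ζ is a strictly decreasing bijection from ℝ onto (0, ∞), and its inverse ζ⁻¹ : (0,∞) → ℝ is differentiable with derivative (ζ⁻¹)'(λ) = − g(ζ⁻¹(λ))² / F(ζ⁻¹(λ)) = − (1/λ²) / F(ζ⁻¹(λ)); in particular (ζ⁻¹)' is negative and bounded on every compact interval [λ_min, λ_max] ⊂ (0,∞). (The inverse-derivative identity underlying Lemma G.2 on Lipschitz continuity of the influence functions in λ.) -/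

import Mathlib

open MeasureTheory

/-!
Pointwise in `y`, the map `ξ ↦ max (ξ - y) 0` lies above each of its tangent lines. Integrating
shows that `F a = μ (-∞, a]` is a slope at `a` of a line supporting the graph of
`g ξ = ∫ max (ξ - y) 0 ∂μ`. Where `F` is positive, this makes `g` strictly increasing and unbounded;
where `F` is continuous, exchanging the two base points squeezes the difference quotients of `g`
and gives the strict derivative `F`. With `g → 0` at `-∞`, the intermediate value theorem and the
inverse function rule finish the argument.
-/

section

open Set Filter Topology

theorem hasStrictDerivAt_of_subgradient {f f' : ℝ → ℝ} {x : ℝ}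
    (hsub : ∀ a b, f' a * (b - a) ≤ f b - f a) (hf' : ContinuousAt f' x) :
    HasStrictDerivAt f (f' x) x := by
  refine .of_isLittleO (Asymptotics.IsLittleO.of_bound fun c hc => ?_)
  have hnear : ∀ᶠ y in 𝓝 x, |f' y - f' x| ≤ c := by
    filter_upwards [Metric.tendsto_nhds.1 hf' c hc] with y hy using hy.le
  rw [nhds_prod_eq]
  filter_upwards [hnear.prod_mk hnear] with ⟨b, a⟩ ⟨hb, ha⟩
  have slope_error_le : ∀ s, |s - f' x| ≤ c → |(s - f' x) * (b - a)| ≤ c * |b - a| := fun s hs => by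
    rw [abs_mul]; gcongr
  have hlower := (abs_le.1 (slope_error_le (f' a) ha)).1
  have hupper := (abs_le.1 (slope_error_le (f' b) hb)).2
  simp only [ContinuousLinearMap.toSpanSingleton_apply, smul_eq_mul, Real.norm_eq_abs]
  rw [abs_le]
  constructor <;> linarith [hsub a b, hsub b a]

theorem indicator_Iic_const_sub {α : Type*} [AddCommGroup α] [LinearOrder α]
    [IsOrderedAddMonoid α] (c : α) :
    (Iic c).indicator (fun y => c - y) = fun y => max (c - y) 0 := by
  ext y
  by_cases hy : y ≤ c
  · rw [indicator_of_mem (mem_Iic.2 hy), max_eq_left (sub_nonneg.2 hy)]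
  · rw [indicator_of_notMem (mt mem_Iic.1 hy), max_eq_right (sub_nonpos.2 (le_of_not_ge hy))]

theorem isOpenPosMeasure_withDensity_ofReal {X : Type*} [TopologicalSpace X] [MeasurableSpace X]
    {μ : Measure X} [μ.IsOpenPosMeasure] {p : X → ℝ} (hp : AEMeasurable p μ)
    (hpos : ∀ᵐ x ∂μ, 0 < p x) :
    (μ.withDensity fun x => ENNReal.ofReal (p x)).IsOpenPosMeasure :=
  (withDensity_absolutelyContinuous' hp.ennreal_ofReal
    (hpos.mono fun _ hx => (ENNReal.ofReal_pos.2 hx).ne')).isOpenPosMeasure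

theorem measure_Iic_pos {X : Type*} [TopologicalSpace X] [LinearOrder X] [OrderTopology X]
    [NoMinOrder X] [MeasurableSpace X] (μ : Measure X) [μ.IsOpenPosMeasure] (a : X) :
    0 < μ (Iic a) :=
  (Measure.measure_Iio_pos μ a).trans_le (measure_mono Iio_subset_Iic_self)

/-- The first lower partial moment `E[(ξ - Y)⁺]` of a random variable `Y` with law `μ`. It is
the function `g` of the paper, whose `ζ` is the pointwise inverse `fun ξ => (g ξ)⁻¹`. -/
noncomputable def lowerPartialMoment (μ : Measure ℝ) (ξ : ℝ) : ℝ :=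
  ∫ y in Iic ξ, (ξ - y) ∂μ

variable {μ : Measure ℝ}

theorem lowerPartialMoment_eq_integral_max (μ : Measure ℝ) (ξ : ℝ) :
    lowerPartialMoment μ ξ = ∫ y, max (ξ - y) 0 ∂μ := by
  rw [lowerPartialMoment, ← integral_indicator measurableSet_Iic, indicator_Iic_const_sub]

theorem integrableOn_Iic_const_sub_iff {ξ : ℝ} :
    IntegrableOn (fun y => ξ - y) (Iic ξ) μ ↔ Integrable (fun y => max (ξ - y) 0) μ := by
  rw [← integrable_indicator_iff measurableSet_Iic, indicator_Iic_const_sub]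

theorem lowerPartialMoment_nonneg (μ : Measure ℝ) (ξ : ℝ) : 0 ≤ lowerPartialMoment μ ξ := by
  rw [lowerPartialMoment_eq_integral_max]
  exact integral_nonneg fun _ => le_max_right _ _

theorem measure_Iic_lt_top_of_integrableOn {a b : ℝ} (hab : a < b)
    (h_int : IntegrableOn (fun y => b - y) (Iic b) μ) : μ (Iic a) < ⊤ :=
  (measure_mono fun y (hy : y ≤ a) => le_max_of_le_left (sub_le_sub_left hy b)).trans_lt
    ((integrableOn_Iic_const_sub_iff.1 h_int).measure_ge_lt_top (sub_pos.2 hab))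

theorem continuous_measureReal_Iic [NullSingletonClass μ] (hfin : ∀ a, μ (Iic a) ≠ ⊤) :
    Continuous fun a => μ.real (Iic a) := by
  refine continuous_iff_continuousAt.2 fun a => ?_
  have hone : IntegrableOn (fun _ => (1 : ℝ)) (Iic (a + 1)) μ := integrableOn_const (hfin _)
  simpa using hone.continuousOn_Iic_primitive_Iic.continuousAt (Iic_mem_nhds (lt_add_one a))

theorem tendsto_lowerPartialMoment_atBot {c : ℝ}
    (h_int : IntegrableOn (fun y => c - y) (Iic c) μ) :
    Tendsto (lowerPartialMoment μ) atBot (𝓝 0) := by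
  rw [funext (lowerPartialMoment_eq_integral_max μ)]
  suffices Tendsto (fun ξ => ∫ y, max (ξ - y) 0 ∂μ) atBot (𝓝 (∫ _, (0 : ℝ) ∂μ)) by simpa using this
  refine tendsto_integral_filter_of_dominated_convergence (fun y => max (c - y) 0)
    (.of_forall fun ξ => by fun_prop) ?_ (integrableOn_Iic_const_sub_iff.1 h_int) ?_
  · filter_upwards [eventually_le_atBot c] with ξ hξ
    refine .of_forall fun y => ?_
    rw [Real.norm_of_nonneg (le_max_right _ _)]
    gcongr
  · refine .of_forall fun y => tendsto_const_nhds.congr' ?_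
    filter_upwards [eventually_le_atBot y] with ξ hξ
    exact (max_eq_right (sub_nonpos.2 hξ)).symm

theorem measureReal_Iic_mul_sub_le_lowerPartialMoment_sub
    (h_int : ∀ ξ, IntegrableOn (fun y => ξ - y) (Iic ξ) μ) (a b : ℝ) :
    μ.real (Iic a) * (b - a) ≤ lowerPartialMoment μ b - lowerPartialMoment μ a := by
  have hfin : μ (Iic a) ≠ ⊤ := (measure_Iic_lt_top_of_integrableOn (lt_add_one a) (h_int _)).ne
  have hconst : IntegrableOn (fun _ => b - a) (Iic a) μ := integrableOn_const hfin
  have hmax : Integrable (fun y => max (b - y) 0) μ := integrableOn_Iic_const_sub_iff.1 (h_int b)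
  rw [le_sub_iff_add_le']
  calc lowerPartialMoment μ a + μ.real (Iic a) * (b - a)
      = ∫ y in Iic a, ((a - y) + (b - a)) ∂μ := by
        rw [integral_add (h_int a) hconst, setIntegral_const, smul_eq_mul, lowerPartialMoment]
    _ ≤ ∫ y in Iic a, max (b - y) 0 ∂μ :=
        integral_mono ((h_int a).add hconst) hmax.integrableOn fun y =>
          le_max_of_le_left (by linarith)
    _ ≤ ∫ y, max (b - y) 0 ∂μ :=
        setIntegral_le_integral hmax (.of_forall fun y => le_max_right _ _)
    _ = lowerPartialMoment μ b := (lowerPartialMoment_eq_integral_max μ b).symm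

theorem hasStrictDerivAt_lowerPartialMoment [NullSingletonClass μ]
    (h_int : ∀ ξ, IntegrableOn (fun y => ξ - y) (Iic ξ) μ) (ξ : ℝ) :
    HasStrictDerivAt (lowerPartialMoment μ) (μ.real (Iic ξ)) ξ :=
  hasStrictDerivAt_of_subgradient (measureReal_Iic_mul_sub_le_lowerPartialMoment_sub h_int)
    (continuous_measureReal_Iic fun a =>
      (measure_Iic_lt_top_of_integrableOn (lt_add_one a) (h_int _)).ne).continuousAt

theorem continuous_lowerPartialMoment [NullSingletonClass μ]
    (h_int : ∀ ξ, IntegrableOn (fun y => ξ - y) (Iic ξ) μ) : Continuous (lowerPartialMoment μ) :=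
  continuous_iff_continuousAt.2 fun ξ =>
    (hasStrictDerivAt_lowerPartialMoment h_int ξ).hasDerivAt.continuousAt

theorem strictMono_lowerPartialMoment (h_int : ∀ ξ, IntegrableOn (fun y => ξ - y) (Iic ξ) μ)
    (hF : ∀ a, 0 < μ.real (Iic a)) : StrictMono (lowerPartialMoment μ) := fun a b hab => by
  linarith [measureReal_Iic_mul_sub_le_lowerPartialMoment_sub h_int a b,
    mul_pos (hF a) (sub_pos.2 hab)]

theorem lowerPartialMoment_pos (h_int : ∀ ξ, IntegrableOn (fun y => ξ - y) (Iic ξ) μ)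
    (hF : ∀ a, 0 < μ.real (Iic a)) (ξ : ℝ) : 0 < lowerPartialMoment μ ξ :=
  (lowerPartialMoment_nonneg μ (ξ - 1)).trans_lt
    (strictMono_lowerPartialMoment h_int hF (sub_one_lt ξ))

theorem tendsto_lowerPartialMoment_atTop {a : ℝ}
    (h_int : ∀ ξ, IntegrableOn (fun y => ξ - y) (Iic ξ) μ) (ha : 0 < μ.real (Iic a)) :
    Tendsto (lowerPartialMoment μ) atTop atTop := by
  have hline : Tendsto (fun ξ => μ.real (Iic a) * (ξ - a)) atTop atTop :=
    (tendsto_atTop_add_const_right _ (-a) tendsto_id).const_mul_atTop ha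
  refine tendsto_atTop_mono (fun ξ => ?_) hline
  linarith [measureReal_Iic_mul_sub_le_lowerPartialMoment_sub h_int a ξ,
    lowerPartialMoment_nonneg μ a]

theorem strictAnti_inv_lowerPartialMoment (h_int : ∀ ξ, IntegrableOn (fun y => ξ - y) (Iic ξ) μ)
    (hF : ∀ a, 0 < μ.real (Iic a)) : StrictAnti fun ξ => (lowerPartialMoment μ ξ)⁻¹ :=
  fun a _ hab => inv_strictAnti₀ (lowerPartialMoment_pos h_int hF a)
    (strictMono_lowerPartialMoment h_int hF hab)

theorem bijOn_inv_lowerPartialMoment [NullSingletonClass μ]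
    (h_int : ∀ ξ, IntegrableOn (fun y => ξ - y) (Iic ξ) μ) (hF : ∀ a, 0 < μ.real (Iic a)) :
    BijOn (fun ξ => (lowerPartialMoment μ ξ)⁻¹) univ (Ioi 0) := by
  refine ⟨fun ξ _ => inv_pos.2 (lowerPartialMoment_pos h_int hF ξ),
    (strictAnti_inv_lowerPartialMoment h_int hF).injective.injOn, fun l hl => ?_⟩
  obtain ⟨ξ, -, hξ⟩ := isPreconnected_univ.intermediate_value_Ioi (l₁ := atBot) (l₂ := atTop)
    (by simp) (by simp) (continuous_lowerPartialMoment h_int).continuousOn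
    (tendsto_lowerPartialMoment_atBot (h_int 0)) (tendsto_lowerPartialMoment_atTop h_int (hF 0))
    (mem_Ioi.2 (inv_pos.2 hl))
  exact ⟨ξ, mem_univ ξ, by simp only [hξ, inv_inv]⟩

theorem hasDerivAt_of_leftInverse_inv_lowerPartialMoment [NullSingletonClass μ]
    (h_int : ∀ ξ, IntegrableOn (fun y => ξ - y) (Iic ξ) μ) (hF : ∀ a, 0 < μ.real (Iic a))
    {z : ℝ → ℝ} (hz : Function.LeftInverse z fun ξ => (lowerPartialMoment μ ξ)⁻¹)
    {l : ℝ} (hl : 0 < l) :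
    HasDerivAt z (-lowerPartialMoment μ (z l) ^ 2 / μ.real (Iic (z l))) l := by
  obtain ⟨ξ, -, rfl⟩ := (bijOn_inv_lowerPartialMoment h_int hF).surjOn hl
  have hg : lowerPartialMoment μ ξ ≠ 0 := (lowerPartialMoment_pos h_int hF ξ).ne'
  have hζ := (hasStrictDerivAt_inv hg).comp ξ (hasStrictDerivAt_lowerPartialMoment h_int ξ)
  have hslope : -(lowerPartialMoment μ ξ ^ 2)⁻¹ * μ.real (Iic ξ) ≠ 0 :=
    mul_ne_zero (neg_ne_zero.2 (inv_ne_zero (pow_ne_zero 2 hg))) (hF ξ).ne'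
  have hzξ : z (lowerPartialMoment μ ξ)⁻¹ = ξ := hz ξ
  have hinv : -lowerPartialMoment μ ξ ^ 2 / μ.real (Iic ξ) =
      (-(lowerPartialMoment μ ξ ^ 2)⁻¹ * μ.real (Iic ξ))⁻¹ := by
    field_simp
  simp only [hzξ, hinv]
  exact (hζ.to_local_left_inverse hslope (.of_forall hz)).hasDerivAt

theorem exists_abs_le_of_leftInverse_inv_lowerPartialMoment [NullSingletonClass μ]
    (h_int : ∀ ξ, IntegrableOn (fun y => ξ - y) (Iic ξ) μ) (hF : ∀ a, 0 < μ.real (Iic a))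
    {z : ℝ → ℝ} (hz : Function.LeftInverse z fun ξ => (lowerPartialMoment μ ξ)⁻¹)
    {K : Set ℝ} (hK : IsCompact K) (hKpos : K ⊆ Ioi 0) :
    ∃ C, ∀ l ∈ K, |-lowerPartialMoment μ (z l) ^ 2 / μ.real (Iic (z l))| ≤ C := by
  have hz_cont : ContinuousOn z K := fun l hl =>
    (hasDerivAt_of_leftInverse_inv_lowerPartialMoment h_int hF hz
      (hKpos hl)).continuousAt.continuousWithinAt
  have hg_cont := (continuous_lowerPartialMoment h_int).comp_continuousOn hz_cont
  have hF_cont := (continuous_measureReal_Iic fun a =>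
    (measure_Iic_lt_top_of_integrableOn (lt_add_one a) (h_int _)).ne).comp_continuousOn hz_cont
  exact hK.exists_bound_of_continuousOn
    ((hg_cont.pow 2).neg.div hF_cont fun l _ => (hF (z l)).ne')

theorem stmt_16_general [NullSingletonClass μ]
    (h_int : ∀ ξ, IntegrableOn (fun y => ξ - y) (Iic ξ) μ) (hF : ∀ a, 0 < μ.real (Iic a)) :
    StrictAnti (fun ξ => (lowerPartialMoment μ ξ)⁻¹) ∧
    BijOn (fun ξ => (lowerPartialMoment μ ξ)⁻¹) univ (Ioi 0) ∧
    ∀ z : ℝ → ℝ, (∀ ξ, z (lowerPartialMoment μ ξ)⁻¹ = ξ) →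
      (∀ l ∈ Ioi (0 : ℝ),
        HasDerivAt z (-lowerPartialMoment μ (z l) ^ 2 / μ.real (Iic (z l))) l ∧
        -lowerPartialMoment μ (z l) ^ 2 / μ.real (Iic (z l)) =
          -(1 / l ^ 2) / μ.real (Iic (z l)) ∧
        -lowerPartialMoment μ (z l) ^ 2 / μ.real (Iic (z l)) < 0) ∧
      ∀ K ⊆ Ioi (0 : ℝ), IsCompact K →
        ∃ C, ∀ l ∈ K, |-lowerPartialMoment μ (z l) ^ 2 / μ.real (Iic (z l))| ≤ C := by
  refine ⟨strictAnti_inv_lowerPartialMoment h_int hF, bijOn_inv_lowerPartialMoment h_int hF,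
    fun z hz => ⟨fun l hl => ⟨?_, ?_, ?_⟩, fun K hKpos hK => ?_⟩⟩
  · exact hasDerivAt_of_leftInverse_inv_lowerPartialMoment h_int hF hz hl
  · obtain ⟨ξ, -, rfl⟩ := (bijOn_inv_lowerPartialMoment h_int hF).surjOn hl
    simp only [hz, inv_pow, one_div, inv_inv]
  · rw [neg_div]
    exact neg_neg_of_pos (div_pos (pow_pos (lowerPartialMoment_pos h_int hF _) 2) (hF _))
  · exact exists_abs_le_of_leftInverse_inv_lowerPartialMoment h_int hF hz hK hKpos

theorem integrable_id_of_integrable_sq [IsFiniteMeasure μ]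
    (hsq : Integrable (fun y => y ^ 2) μ) : Integrable (fun y => y) μ :=
  ((memLp_two_iff_integrable_sq (by fun_prop)).2 hsq).integrable one_le_two

end

/-- The inverse-derivative identity underlying Lemma G.2: with
`g(ξ) = E[(ξ-Y) 1{Y≤ξ}]` and `ζ(ξ) = 1/g(ξ)`, the map `ζ` is a strictly decreasing
bijection from `ℝ` onto `(0, ∞)`, and any inverse `ζ⁻¹` is differentiable on `(0, ∞)`
with derivative `-(g(ζ⁻¹ λ))² / F(ζ⁻¹ λ) = -(1/λ²) / F(ζ⁻¹ λ)`, which is negative and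
bounded on every compact interval `[λmin, λmax] ⊆ (0, ∞)`. -/
theorem stmt_16 (μ : Measure ℝ) [IsProbabilityMeasure μ] (p : ℝ → ℝ)
    (hp_cont : Continuous p) (hp_pos : ∀ x, 0 < p x)
    (hμ : μ = MeasureTheory.volume.withDensity fun x => ENNReal.ofReal (p x))
    (hmom : Integrable (fun y => y ^ 2) μ) :
    StrictAnti (fun ξ : ℝ => (∫ y in Set.Iic ξ, (ξ - y) ∂μ)⁻¹) ∧
    Set.BijOn (fun ξ : ℝ => (∫ y in Set.Iic ξ, (ξ - y) ∂μ)⁻¹) Set.univ (Set.Ioi 0) ∧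
    ∀ ζinv : ℝ → ℝ,
      (∀ ξ : ℝ, ζinv ((∫ y in Set.Iic ξ, (ξ - y) ∂μ)⁻¹) = ξ) →
      (∀ lam ∈ Set.Ioi (0 : ℝ),
        (∫ y in Set.Iic (ζinv lam), (ζinv lam - y) ∂μ)⁻¹ = lam) →
      (∀ lam ∈ Set.Ioi (0 : ℝ),
        HasDerivAt ζinv
          (-(∫ y in Set.Iic (ζinv lam), (ζinv lam - y) ∂μ) ^ 2 /
            (μ (Set.Iic (ζinv lam))).toReal) lam ∧
        -(∫ y in Set.Iic (ζinv lam), (ζinv lam - y) ∂μ) ^ 2 /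
            (μ (Set.Iic (ζinv lam))).toReal =
          -(1 / lam ^ 2) / (μ (Set.Iic (ζinv lam))).toReal ∧
        -(∫ y in Set.Iic (ζinv lam), (ζinv lam - y) ∂μ) ^ 2 /
            (μ (Set.Iic (ζinv lam))).toReal < 0) ∧
      ∀ lmin lmax : ℝ, 0 < lmin → lmin ≤ lmax →
        ∃ C : ℝ, ∀ lam ∈ Set.Icc lmin lmax,
          |(-(∫ y in Set.Iic (ζinv lam), (ζinv lam - y) ∂μ) ^ 2 /
            (μ (Set.Iic (ζinv lam))).toReal)| ≤ C := by
  have : μ.IsOpenPosMeasure := hμ ▸ isOpenPosMeasure_withDensity_ofReal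
    hp_cont.aemeasurable (.of_forall hp_pos)
  have : NullSingletonClass μ := hμ ▸ inferInstance
  have h_int (ξ : ℝ) : IntegrableOn (fun y => ξ - y) (Set.Iic ξ) μ :=
    ((integrable_const ξ).sub (integrable_id_of_integrable_sq hmom)).integrableOn
  have hF (a : ℝ) : 0 < μ.real (Set.Iic a) :=
    ENNReal.toReal_pos (measure_Iic_pos μ a).ne' (measure_ne_top _ _)
  obtain ⟨hanti, hbij, hinv⟩ := stmt_16_general h_int hF
  refine ⟨hanti, hbij, fun ζinv hleft _ => ?_⟩
  obtain ⟨hderiv, hbound⟩ := hinv ζinv hleft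
  exact ⟨hderiv, fun _ _ hlmin _ =>
    hbound _ (fun _ hl => hlmin.trans_le hl.1) isCompact_Icc⟩
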